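/- Let A be a nonzero real symmetric n×n matrix and x ~ N(0, Iₙ) a standard Gaussian vector. For every 0 < r < 1 with ξ_r := ∑_{k=0}^∞ r^k/(k+2) and every a > 0, P(|xᵀAx - E[xᵀAx]| > a) ≤ 2·exp(-min{a²/(8ξ_r·‖A‖₂²), r·a/(4·‖A‖)}), where ‖A‖₂ is the Hilbert–Schmidt (Frobenius) norm and ‖A‖ the operator norm. -/

import Mathlib

open MeasureTheory ProbabilityTheory Matrix

noncomputable def xi (r : ℝ) : ℝ := ∑' k : ℕ, r ^ k / ((k : ℝ) + 2)

/-- The Euclidean operator norm of a matrix. -/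
noncomputable def opNorm {n : ℕ} (A : Matrix (Fin n) (Fin n) ℝ) : ℝ :=
  sSup {c | ∃ v : Fin n → ℝ, Real.sqrt (∑ i, v i ^ 2) ≤ 1 ∧
    c = Real.sqrt (∑ i, (A.mulVec v i) ^ 2)}

/-!
A quadratic form only sees the symmetric part of its matrix, whose norms are no larger than those
of the matrix. By rotation invariance of the Gaussian measure, the centred quadratic form of a
symmetric matrix with eigenvalues `l i` is distributed as `∑ i, l i * (y i ^ 2 - 1)` with `y`
standard Gaussian. The moment generating function of `y ^ 2 - 1` at `t` is
`exp (-t) / √(1 - 2 * t)`, and comparing the power series of `-log (1 - s) - s` at `s = 2 * t` with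
`s ^ 2 * xi r` bounds it by `exp (2 * xi r * t ^ 2)` for `|2 * t| ≤ r`. This bound tensorises, and
Chernoff's inequality, optimised over `|t| ≤ r / (2 * ‖A‖)`, gives the tail.
-/

local notation "γ[" ι "]" => Measure.pi fun _ : ι => gaussianReal 0 1

lemma summable_pow_div_nat_add_two {r : ℝ} (hr : |r| < 1) :
    Summable fun k : ℕ => r ^ k / ((k : ℝ) + 2) := by
  refine (summable_geometric_of_lt_one (abs_nonneg r) hr).of_norm_bounded fun k => ?_
  have hk : (1 : ℝ) ≤ (k : ℝ) + 2 := by linarith [(Nat.cast_nonneg k : (0 : ℝ) ≤ k)]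
  rw [norm_div, norm_pow, Real.norm_eq_abs, Real.norm_of_nonneg (zero_le_one.trans hk)]
  exact div_le_self (by positivity) hk

lemma hasSum_neg_log_one_sub_sub {s : ℝ} (hs : |s| < 1) :
    HasSum (fun k : ℕ => s ^ 2 * (s ^ k / ((k : ℝ) + 2))) (-Real.log (1 - s) - s) := by
  have hlog := (hasSum_nat_add_iff' 1).2 (Real.hasSum_pow_div_log_of_abs_lt_one hs)
  have hterm (k : ℕ) : s ^ (k + 1 + 1) / (((k + 1 : ℕ) : ℝ) + 1) =
      s ^ 2 * (s ^ k / ((k : ℝ) + 2)) := by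
    push_cast
    ring
  simpa only [hterm, Finset.sum_range_one, Nat.cast_zero, zero_add, pow_one, div_one] using hlog

lemma neg_log_one_sub_sub_le_sq_mul_xi {r s : ℝ} (hr : r < 1) (hs : |s| ≤ r) :
    -Real.log (1 - s) - s ≤ s ^ 2 * xi r := by
  have hr' : |r| < 1 := by rwa [abs_of_nonneg ((abs_nonneg s).trans hs)]
  refine hasSum_le (fun k => ?_) (hasSum_neg_log_one_sub_sub (hs.trans_lt hr))
    ((summable_pow_div_nat_add_two hr').hasSum.mul_left (s ^ 2))
  have hpow : s ^ k ≤ r ^ k := calc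
    s ^ k ≤ |s| ^ k := abs_pow s k ▸ le_abs_self (s ^ k)
    _ ≤ r ^ k := by gcongr
  gcongr

lemma xi_pos {r : ℝ} (h₀ : 0 ≤ r) (h₁ : r < 1) : 0 < xi r :=
  (summable_pow_div_nat_add_two (by rwa [abs_of_nonneg h₀])).tsum_pos
    (fun _ => by positivity) 0 (by norm_num)

/-- A real random variable `X` is sub-exponential with variance factor `c` on the window `b` if
its moment generating function is finite and at most `exp (c * t ^ 2)` for all `|t| ≤ b`.
The exponent is `c * t ^ 2` rather than the `c * t ^ 2 / 2` of `HasSubgaussianMGF`. -/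
structure HasSubexponentialMGF {Ω : Type*} {m : MeasurableSpace Ω} (X : Ω → ℝ) (c b : ℝ)
    (μ : Measure Ω) : Prop where
  integrable_exp_mul : ∀ t, |t| ≤ b → Integrable (fun ω => Real.exp (t * X ω)) μ
  mgf_le : ∀ t, |t| ≤ b → mgf X μ t ≤ Real.exp (c * t ^ 2)

namespace HasSubexponentialMGF

variable {Ω Ω' ι : Type*} {m : MeasurableSpace Ω} {m' : MeasurableSpace Ω'} {μ : Measure Ω}
  {ν : Measure Ω'} {X : Ω → ℝ} {Y : Ω' → ℝ} {b c : ℝ}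

lemma mono {c' : ℝ} (h : HasSubexponentialMGF X c b μ) (hc : c ≤ c') :
    HasSubexponentialMGF X c' b μ where
  integrable_exp_mul := h.integrable_exp_mul
  mgf_le t ht := (h.mgf_le t ht).trans (by gcongr)

lemma congr_identDistrib (h : HasSubexponentialMGF X c b μ) (hXY : IdentDistrib X Y μ ν) :
    HasSubexponentialMGF Y c b ν where
  integrable_exp_mul t ht :=
    (hXY.comp (measurable_const_mul t).exp).integrable_iff.1 (h.integrable_exp_mul t ht)
  mgf_le t ht := mgf_congr_identDistrib hXY ▸ h.mgf_le t ht

lemma const_mul {b' : ℝ} (h : HasSubexponentialMGF X c b μ) (l : ℝ) (hb : |l| * b' ≤ b) :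
    HasSubexponentialMGF (fun ω => l * X ω) (l ^ 2 * c) b' μ := by
  have hmem {t : ℝ} (ht : |t| ≤ b') : |l * t| ≤ b := calc
    |l * t| = |l| * |t| := abs_mul l t
    _ ≤ |l| * b' := by gcongr
    _ ≤ b := hb
  constructor
  · intro t ht
    simpa only [mul_left_comm t l, mul_assoc] using h.integrable_exp_mul (l * t) (hmem ht)
  · intro t ht
    rw [mgf_const_mul, show l ^ 2 * c * t ^ 2 = c * (l * t) ^ 2 by ring]
    exact h.mgf_le _ (hmem ht)

lemma neg (h : HasSubexponentialMGF X c b μ) : HasSubexponentialMGF (-X) c b μ := by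
  simpa [Pi.neg_def] using h.const_mul (-1) (b' := b) (by simp)

lemma sum_of_iIndepFun [Fintype ι] {X : ι → Ω → ℝ} {c : ι → ℝ} (hindep : iIndepFun X μ)
    (hmeas : ∀ i, Measurable (X i)) (h : ∀ i, HasSubexponentialMGF (X i) (c i) b μ) :
    HasSubexponentialMGF (∑ i, X i) (∑ i, c i) b μ where
  integrable_exp_mul t ht :=
    have := hindep.isProbabilityMeasure
    hindep.integrable_exp_mul_sum hmeas fun i _ => (h i).integrable_exp_mul t ht
  mgf_le t ht := calc
    mgf (∑ i, X i) μ t = ∏ i, mgf (X i) μ t := hindep.mgf_sum hmeas Finset.univ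
    _ ≤ ∏ i, Real.exp (c i * t ^ 2) :=
      Finset.prod_le_prod (fun _ _ => mgf_nonneg) fun i _ => (h i).mgf_le t ht
    _ = Real.exp ((∑ i, c i) * t ^ 2) := by rw [← Real.exp_sum, Finset.sum_mul]

lemma measure_ge_le [IsFiniteMeasure μ] (h : HasSubexponentialMGF X c b μ) (hc : 0 < c)
    (hb : 0 ≤ b) {a : ℝ} (ha : 0 ≤ a) :
    μ.real {ω | a ≤ X ω} ≤ Real.exp (-min (a ^ 2 / (4 * c)) (b * a / 2)) := by
  -- `a / (2 * c)` minimises `-t * a + c * t ^ 2`; it is truncated to the window.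
  set t := min (a / (2 * c)) b with ht_def
  have ht : 0 ≤ t := le_min (by positivity) hb
  have htb : |t| ≤ b := (abs_of_nonneg ht).trans_le (min_le_right _ _)
  have hquad : c * t ^ 2 ≤ t * a / 2 := by
    have : t * (2 * c) ≤ a := (le_div_iff₀ (by positivity)).1 (min_le_left _ _)
    nlinarith
  have hmin : min (a ^ 2 / (4 * c)) (b * a / 2) = t * a / 2 := by
    rw [ht_def, mul_div_assoc, mul_div_assoc, min_mul_of_nonneg _ _ (by positivity)]
    congr 1
    field_simp
    norm_num
  calc μ.real {ω | a ≤ X ω}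
    _ ≤ Real.exp (-t * a) * mgf X μ t :=
      measure_ge_le_exp_mul_mgf a ht (h.integrable_exp_mul t htb)
    _ ≤ Real.exp (-t * a) * Real.exp (c * t ^ 2) := by gcongr; exact h.mgf_le t htb
    _ = Real.exp (-t * a + c * t ^ 2) := (Real.exp_add _ _).symm
    _ ≤ Real.exp (-min (a ^ 2 / (4 * c)) (b * a / 2)) := by
      rw [hmin]
      gcongr
      linarith

lemma measure_abs_ge_le [IsFiniteMeasure μ] (h : HasSubexponentialMGF X c b μ) (hc : 0 < c)
    (hb : 0 ≤ b) {a : ℝ} (ha : 0 ≤ a) :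
    μ.real {ω | a ≤ |X ω|} ≤ 2 * Real.exp (-min (a ^ 2 / (4 * c)) (b * a / 2)) := by
  have hunion : {ω | a ≤ |X ω|} = {ω | a ≤ X ω} ∪ {ω | a ≤ (-X) ω} := by
    ext ω
    exact le_abs (a := a) (b := X ω)
  rw [hunion, two_mul]
  exact (measureReal_union_le _ _).trans
    (add_le_add (h.measure_ge_le hc hb ha) (h.neg.measure_ge_le hc hb ha))

end HasSubexponentialMGF

section GaussianSquare

open scoped NNReal

lemma mgf_sq_gaussianReal (v : ℝ≥0) {t : ℝ} (ht : 2 * v * t < 1) :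
    mgf (fun x => x ^ 2) (gaussianReal 0 v) t = (√(1 - 2 * v * t))⁻¹ := by
  rcases eq_or_ne v 0 with rfl | hv
  · simp [mgf]
  have hdensity (x : ℝ) : gaussianPDFReal 0 v x • Real.exp (t * x ^ 2) =
      (√(2 * Real.pi * v))⁻¹ * Real.exp (-((1 - 2 * v * t) / (2 * v)) * x ^ 2) := by
    rw [gaussianPDFReal, smul_eq_mul, mul_assoc, ← Real.exp_add]
    congr 2
    field_simp
    ring
  have hsqrt : √(Real.pi / ((1 - 2 * v * t) / (2 * v))) =
      √(2 * Real.pi * v) * (√(1 - 2 * v * t))⁻¹ := by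
    rw [← Real.sqrt_inv, ← Real.sqrt_mul (by positivity)]
    congr 1
    field_simp
  rw [mgf, integral_gaussianReal_eq_integral_smul hv]
  simp_rw [hdensity]
  rw [integral_const_mul, integral_gaussian, hsqrt, inv_mul_cancel_left₀ (by positivity)]

lemma integrable_exp_mul_sq_gaussianReal (v : ℝ≥0) {t : ℝ} (ht : 2 * v * t < 1) :
    Integrable (fun x => Real.exp (t * x ^ 2)) (gaussianReal 0 v) := by
  by_contra hint
  have hzero := mgf_undef hint
  rw [mgf_sq_gaussianReal v ht] at hzero
  exact (inv_pos.2 (Real.sqrt_pos.2 (sub_pos.2 ht))).ne' hzero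

lemma integrable_sq_gaussianReal (v : ℝ≥0) : Integrable (fun x => x ^ 2) (gaussianReal 0 v) :=
  (memLp_id_gaussianReal 2).integrable_sq

lemma integral_sq_gaussianReal (v : ℝ≥0) : ∫ x, x ^ 2 ∂gaussianReal 0 v = v := by
  have hvar := variance_fun_id_gaussianReal (μ := 0) (v := v)
  rw [variance_eq_integral measurable_id'.aemeasurable] at hvar
  simpa only [integral_id_gaussianReal, sub_zero] using hvar

lemma hasSubexponentialMGF_sq_sub_one_gaussianReal {r : ℝ} (hr : r < 1) :
    HasSubexponentialMGF (fun x => x ^ 2 - 1) (2 * xi r) (r / 2) (gaussianReal 0 1) := by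
  have hwindow {t : ℝ} (ht : |t| ≤ r / 2) : |2 * t| ≤ r := by
    rw [abs_mul, abs_two]
    linarith
  have hlt {t : ℝ} (ht : |t| ≤ r / 2) : 2 * t < 1 :=
    (le_abs_self _).trans_lt ((hwindow ht).trans_lt hr)
  constructor
  · intro t ht
    simp_rw [mul_sub, Real.exp_sub]
    exact (integrable_exp_mul_sq_gaussianReal 1 (by simpa using hlt ht)).div_const _
  · intro t ht
    have hpos : 0 < 1 - 2 * t := sub_pos.2 (hlt ht)
    have hlog := neg_log_one_sub_sub_le_sq_mul_xi hr (hwindow ht)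
    calc mgf (fun x => x ^ 2 - 1) (gaussianReal 0 1) t
      _ = (√(1 - 2 * t))⁻¹ * Real.exp (-t) := by
        simp_rw [sub_eq_add_neg _ (1 : ℝ)]
        rw [mgf_add_const, mgf_sq_gaussianReal 1 (by simpa using hlt ht)]
        simp
      _ = Real.exp (-(Real.log (1 - 2 * t) / 2) + -t) := by
        rw [Real.exp_add, Real.exp_neg (_ / 2), Real.exp_half, Real.exp_log hpos]
      _ ≤ Real.exp (2 * xi r * t ^ 2) := by
        gcongr
        linarith

lemma hasSubexponentialMGF_sum_mul_sq_sub_one {ι : Type*} [Fintype ι] (l : ι → ℝ) {r b : ℝ}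
    (hr : r < 1) (hb : ∀ i, |l i| * b ≤ r / 2) :
    HasSubexponentialMGF (fun x : ι → ℝ => ∑ i, l i * (x i ^ 2 - 1))
      (2 * xi r * ∑ i, l i ^ 2) b γ[ι] := by
  have hcoord (i : ι) : HasSubexponentialMGF (fun x : ι → ℝ => l i * (x i ^ 2 - 1))
      (l i ^ 2 * (2 * xi r)) b γ[ι] := by
    refine ((hasSubexponentialMGF_sq_sub_one_gaussianReal hr).const_mul (l i)
      (hb i)).congr_identDistrib ?_
    have heval : IdentDistrib id (Function.eval i) (gaussianReal 0 1) γ[ι] :=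
      ⟨aemeasurable_id, (measurable_pi_apply i).aemeasurable,
        by rw [Measure.map_id, (measurePreserving_eval _ i).map_eq]⟩
    exact heval.comp (u := fun x => l i * (x ^ 2 - 1)) (by fun_prop)
  have hindep : iIndepFun (fun i (x : ι → ℝ) => l i * (x i ^ 2 - 1)) γ[ι] :=
    iIndepFun_pi (X := fun i x => l i * (x ^ 2 - 1)) fun i => by fun_prop
  have hsum := HasSubexponentialMGF.sum_of_iIndepFun hindep (fun i => by fun_prop) hcoord
  rw [← Finset.sum_mul, mul_comm] at hsum
  simpa only [Finset.sum_fn] using hsum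

end GaussianSquare

section SelfAdjointPart

lemma norm_selfAdjointPart_le {E : Type*} [SeminormedAddCommGroup E] [StarAddMonoid E]
    [NormedStarGroup E] [NormedSpace ℝ E] [StarModule ℝ E] (x : E) :
    ‖(selfAdjointPart ℝ x : E)‖ ≤ ‖x‖ := by
  rw [selfAdjointPart_apply_coe, norm_smul, invOf_eq_inv, norm_inv, Real.norm_ofNat]
  linarith [norm_add_le x (star x), norm_star x]

variable {ι : Type*} [Fintype ι]

lemma trace_transpose_mul_self_eq_sum_sq (A : Matrix ι ι ℝ) :
    (Aᵀ * A).trace = ∑ i, ∑ j, A i j ^ 2 := by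
  rw [Finset.sum_comm]
  simp only [trace, diag_apply, mul_apply, transpose_apply, sq]

lemma trace_transpose_mul_self_pos {A : Matrix ι ι ℝ} (hA : A ≠ 0) : 0 < (Aᵀ * A).trace := by
  have h := trace_conjTranspose_mul_self_eq_zero_iff (A := A)
  rw [conjTranspose_eq_transpose_of_trivial] at h
  refine lt_of_le_of_ne ?_ (mt (h.1 ∘ Eq.symm) hA)
  rw [trace_transpose_mul_self_eq_sum_sq]
  positivity

lemma dotProduct_mulVec_selfAdjointPart (A : Matrix ι ι ℝ) (x : ι → ℝ) :
    x ⬝ᵥ (selfAdjointPart ℝ A : Matrix ι ι ℝ) *ᵥ x = x ⬝ᵥ A *ᵥ x := by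
  have htranspose : x ⬝ᵥ Aᵀ *ᵥ x = x ⬝ᵥ A *ᵥ x := by
    rw [mulVec_transpose, dotProduct_comm, ← dotProduct_mulVec]
  rw [selfAdjointPart_apply_coe, star_eq_conjTranspose, conjTranspose_eq_transpose_of_trivial,
    smul_mulVec, add_mulVec, dotProduct_smul, dotProduct_add, htranspose, smul_add,
    invOf_two_smul_add_invOf_two_smul]

lemma trace_selfAdjointPart (A : Matrix ι ι ℝ) :
    (selfAdjointPart ℝ A : Matrix ι ι ℝ).trace = A.trace := by
  rw [selfAdjointPart_apply_coe, star_eq_conjTranspose, conjTranspose_eq_transpose_of_trivial,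
    trace_smul, trace_add, trace_transpose, smul_add, invOf_two_smul_add_invOf_two_smul]

lemma trace_transpose_mul_self_selfAdjointPart_le (A : Matrix ι ι ℝ) :
    ((selfAdjointPart ℝ A : Matrix ι ι ℝ)ᵀ * (selfAdjointPart ℝ A : Matrix ι ι ℝ)).trace ≤
      (Aᵀ * A).trace := by
  have hentry (i j : ι) :
      (selfAdjointPart ℝ A : Matrix ι ι ℝ) i j ^ 2 ≤ (A i j ^ 2 + A j i ^ 2) / 2 := by
    have h : (selfAdjointPart ℝ A : Matrix ι ι ℝ) i j = (A i j + A j i) / 2 := by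
      simp [div_eq_inv_mul]
    rw [h]
    linarith [sq_nonneg (A i j - A j i)]
  rw [trace_transpose_mul_self_eq_sum_sq, trace_transpose_mul_self_eq_sum_sq]
  calc ∑ i, ∑ j, (selfAdjointPart ℝ A : Matrix ι ι ℝ) i j ^ 2
    _ ≤ ∑ i, ∑ j, (A i j ^ 2 + A j i ^ 2) / 2 := by gcongr with i _ j _; exact hentry i j
    _ = ∑ i, ∑ j, A i j ^ 2 := by
      simp_rw [add_div, Finset.sum_add_distrib]
      rw [Finset.sum_comm (f := fun i j => A j i ^ 2 / 2)]
      simp_rw [← Finset.sum_add_distrib, add_halves]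

end SelfAdjointPart

section QuadraticForm

variable {ι : Type*} [Fintype ι]

lemma measurable_dotProduct_mulVec (A : Matrix ι ι ℝ) : Measurable fun x => x ⬝ᵥ A *ᵥ x := by
  simp only [dotProduct, mulVec]
  fun_prop

variable [DecidableEq ι] {A : Matrix ι ι ℝ}

lemma measurePreserving_mulVec_pi_gaussianReal (U : orthogonalGroup ι ℝ) :
    MeasurePreserving (fun x => (U : Matrix ι ι ℝ) *ᵥ x) γ[ι] γ[ι] := by
  let e := Unitary.linearIsometryEquiv
    ⟨toEuclideanCLM (n := ι) (𝕜 := ℝ) U, Unitary.map_mem _ U.2⟩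
  have hstd : MeasurePreserving (WithLp.toLp 2) γ[ι] (stdGaussian (EuclideanSpace ℝ ι)) :=
    ⟨by fun_prop, map_pi_eq_stdGaussian⟩
  have hrot : MeasurePreserving e (stdGaussian (EuclideanSpace ℝ ι))
      (stdGaussian (EuclideanSpace ℝ ι)) := ⟨by fun_prop, stdGaussian_map e⟩
  have hstd_symm := hstd.symm (MeasurableEquiv.toLp 2 (ι → ℝ))
  exact hstd_symm.comp (hrot.comp hstd)

lemma dotProduct_mulVec_eigenvectorUnitary (hA : A.IsHermitian) (y : ι → ℝ) :
    ((hA.eigenvectorUnitary : Matrix ι ι ℝ) *ᵥ y) ⬝ᵥ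
      A *ᵥ ((hA.eigenvectorUnitary : Matrix ι ι ℝ) *ᵥ y) = ∑ i, hA.eigenvalues i * y i ^ 2 := by
  have hdiag : (hA.eigenvectorUnitary : Matrix ι ι ℝ)ᵀ * A * hA.eigenvectorUnitary =
      diagonal hA.eigenvalues := by
    simpa [Unitary.conjStarAlgAut_star_apply, star_eq_conjTranspose, Function.comp_def]
      using hA.conjStarAlgAut_star_eigenvectorUnitary
  set U : Matrix ι ι ℝ := hA.eigenvectorUnitary.1
  calc (U *ᵥ y) ⬝ᵥ A *ᵥ (U *ᵥ y)
    _ = y ⬝ᵥ (Uᵀ * A * U) *ᵥ y := by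
      rw [← mulVec_mulVec, ← mulVec_mulVec, dotProduct_mulVec y Uᵀ, vecMul_transpose]
    _ = ∑ i, hA.eigenvalues i * y i ^ 2 := by
      rw [hdiag]
      simp only [dotProduct, mulVec_diagonal]
      exact Finset.sum_congr rfl fun i _ => by ring

lemma identDistrib_dotProduct_mulVec (hA : A.IsHermitian) :
    IdentDistrib (fun y => ∑ i, hA.eigenvalues i * y i ^ 2) (fun x => x ⬝ᵥ A *ᵥ x) γ[ι] γ[ι] := by
  have hrot := measurePreserving_mulVec_pi_gaussianReal hA.eigenvectorUnitary
  have hquad := measurable_dotProduct_mulVec A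
  refine ⟨Measurable.aemeasurable (by fun_prop), hquad.aemeasurable, ?_⟩
  conv_rhs => rw [← hrot.map_eq, Measure.map_map hquad hrot.measurable]
  congr 1
  exact funext fun y => (dotProduct_mulVec_eigenvectorUnitary hA y).symm

lemma trace_transpose_mul_self_eq_sum_eigenvalues_sq (hA : A.IsHermitian) :
    (Aᵀ * A).trace = ∑ i, hA.eigenvalues i ^ 2 := by
  have hsymm : Aᵀ = A := by rw [← conjTranspose_eq_transpose_of_trivial, hA.eq]
  rw [hsymm]
  conv_lhs => rw [hA.spectral_theorem, ← map_mul, Unitary.conjStarAlgAut_apply, trace_mul_comm,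
    ← mul_assoc, Unitary.coe_star_mul_self, one_mul, diagonal_mul_diagonal, trace_diagonal]
  simp [sq]

omit [DecidableEq ι] in
lemma integral_dotProduct_mulVec_pi_gaussianReal (A : Matrix ι ι ℝ) :
    ∫ x, x ⬝ᵥ A *ᵥ x ∂γ[ι] = A.trace := by
  classical
  have hS : (selfAdjointPart ℝ A : Matrix ι ι ℝ).IsHermitian := (selfAdjointPart ℝ A).2
  have hint := integrable_sq_gaussianReal 1
  calc ∫ x, x ⬝ᵥ A *ᵥ x ∂γ[ι]
    _ = ∫ y, ∑ i, hS.eigenvalues i * y i ^ 2 ∂γ[ι] := by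
      simp_rw [← dotProduct_mulVec_selfAdjointPart A]
      exact (identDistrib_dotProduct_mulVec hS).integral_eq.symm
    _ = ∑ i, hS.eigenvalues i * ∫ y : ι → ℝ, y i ^ 2 ∂γ[ι] := by
      rw [integral_finsetSum _ fun i _ =>
        (integrable_comp_eval (μ := fun _ : ι => gaussianReal 0 1) hint).const_mul _]
      simp_rw [integral_const_mul]
    _ = ∑ i, hS.eigenvalues i := by
      refine Finset.sum_congr rfl fun i _ => ?_
      rw [integral_comp_eval (μ := fun _ : ι => gaussianReal 0 1) (f := fun x : ℝ => x ^ 2)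
        hint.aestronglyMeasurable, integral_sq_gaussianReal, NNReal.coe_one, mul_one]
    _ = (selfAdjointPart ℝ A : Matrix ι ι ℝ).trace := hS.trace_eq_sum_eigenvalues.symm
    _ = A.trace := trace_selfAdjointPart A

open scoped Matrix.Norms.L2Operator

lemma abs_eigenvalues_le_l2_opNorm (hA : A.IsHermitian) (i : ι) : |hA.eigenvalues i| ≤ ‖A‖ := by
  have : Nonempty ι := ⟨i⟩
  exact spectrum.norm_le_norm_of_mem (hA.eigenvalues_mem_spectrum_real i)

lemma hasSubexponentialMGF_dotProduct_mulVec_sub_trace_of_isHermitian (hA : A.IsHermitian)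
    {r b : ℝ} (hr : r < 1) (hb₀ : 0 ≤ b) (hb : ‖A‖ * b ≤ r / 2) :
    HasSubexponentialMGF (fun x => x ⬝ᵥ A *ᵥ x - A.trace) (2 * xi r * (Aᵀ * A).trace) b γ[ι] := by
  have hdiag := hasSubexponentialMGF_sum_mul_sq_sub_one hA.eigenvalues hr fun i =>
    (mul_le_mul_of_nonneg_right (abs_eigenvalues_le_l2_opNorm hA i) hb₀).trans hb
  rw [← trace_transpose_mul_self_eq_sum_eigenvalues_sq] at hdiag
  refine hdiag.congr_identDistrib ?_
  have htrace : A.trace = ∑ i, hA.eigenvalues i := hA.trace_eq_sum_eigenvalues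
  simp_rw [mul_sub, mul_one, Finset.sum_sub_distrib, ← htrace]
  exact (identDistrib_dotProduct_mulVec hA).comp (measurable_sub_const A.trace)

lemma hasSubexponentialMGF_dotProduct_mulVec_sub_trace (A : Matrix ι ι ℝ) {r b : ℝ}
    (hr : r < 1) (hb₀ : 0 ≤ b) (hb : ‖A‖ * b ≤ r / 2) :
    HasSubexponentialMGF (fun x => x ⬝ᵥ A *ᵥ x - A.trace) (2 * xi r * (Aᵀ * A).trace) b γ[ι] := by
  have hS := hasSubexponentialMGF_dotProduct_mulVec_sub_trace_of_isHermitian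
    (A := (selfAdjointPart ℝ A : Matrix ι ι ℝ)) (selfAdjointPart ℝ A).2 hr hb₀
    ((mul_le_mul_of_nonneg_right (norm_selfAdjointPart_le A) hb₀).trans hb)
  simp_rw [dotProduct_mulVec_selfAdjointPart, trace_selfAdjointPart] at hS
  have hr₀ : 0 ≤ r := by linarith [mul_nonneg (norm_nonneg A) hb₀]
  have := xi_pos hr₀ hr
  refine hS.mono ?_
  gcongr
  exact trace_transpose_mul_self_selfAdjointPart_le A

theorem hanson_wright_r_general (A : Matrix ι ι ℝ) (hA : A ≠ 0) {r : ℝ}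
    (hr : r ∈ Set.Ioo (0 : ℝ) 1) {a : ℝ} (ha : 0 < a) :
    γ[ι].real {x | a ≤ |x ⬝ᵥ A *ᵥ x - ∫ y, y ⬝ᵥ A *ᵥ y ∂γ[ι]|} ≤
      2 * Real.exp (-min (a ^ 2 / (8 * xi r * (Aᵀ * A).trace)) (r * a / (4 * ‖A‖))) := by
  have hvar : 0 < 2 * xi r * (Aᵀ * A).trace :=
    mul_pos (mul_pos two_pos (xi_pos hr.1.le hr.2)) (trace_transpose_mul_self_pos hA)
  have hb₀ : 0 ≤ r / (2 * ‖A‖) := div_nonneg hr.1.le (by positivity)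
  have hb : ‖A‖ * (r / (2 * ‖A‖)) = r / 2 := by
    field_simp [norm_ne_zero_iff.2 hA]
  have htail := (hasSubexponentialMGF_dotProduct_mulVec_sub_trace A hr.2 hb₀
    hb.le).measure_abs_ge_le hvar hb₀ ha.le
  rw [integral_dotProduct_mulVec_pi_gaussianReal]
  convert htail using 5 <;> ring

lemma opNorm_eq_l2_opNorm {n : ℕ} (A : Matrix (Fin n) (Fin n) ℝ) : opNorm A = ‖A‖ := by
  have himage : {c | ∃ v : Fin n → ℝ, √(∑ i, v i ^ 2) ≤ 1 ∧ c = √(∑ i, (A *ᵥ v) i ^ 2)} =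
      (fun x => ‖toEuclideanCLM (𝕜 := ℝ) A x‖) '' Metric.closedBall 0 1 := by
    ext c
    constructor
    · rintro ⟨v, hv, rfl⟩
      exact ⟨WithLp.toLp 2 v, by simpa [EuclideanSpace.norm_eq] using hv,
        by simp [EuclideanSpace.norm_eq]⟩
    · rintro ⟨x, hx, rfl⟩
      exact ⟨x.ofLp, by simpa [EuclideanSpace.norm_eq] using hx, by simp [EuclideanSpace.norm_eq]⟩
  rw [cstar_norm_def, ← ContinuousLinearMap.sSup_unitClosedBall_eq_norm, ← himage, opNorm]

end QuadraticForm

theorem hanson_wright_r (n : ℕ) (A : Matrix (Fin n) (Fin n) ℝ)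
    (hsymm : A.IsSymm) (hA : A ≠ 0)
    (r : ℝ) (hr : r ∈ Set.Ioo (0 : ℝ) 1) (a : ℝ) (ha : 0 < a) :
    (Measure.pi fun _ : Fin n => gaussianReal 0 1)
        {x | a < |x ⬝ᵥ A.mulVec x -
          ∫ y, y ⬝ᵥ A.mulVec y ∂(Measure.pi fun _ : Fin n => gaussianReal 0 1)|}
      ≤ ENNReal.ofReal (2 * Real.exp
          (-min (a ^ 2 / (8 * xi r * (Aᵀ * A).trace))
            (r * a / (4 * opNorm A)))) := by
  rw [opNorm_eq_l2_opNorm, ← ofReal_measureReal]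
  refine ENNReal.ofReal_le_ofReal (le_trans ?_ (hanson_wright_r_general A hA hr ha))
  exact measureReal_mono (Set.ofPred_subset_ofPred.2 fun _ => le_of_lt)
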